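/- arXiv:1802.03736 — 2 statements merged into one kernel-verified Lean document; each statement's English description precedes it below -/
import Mathlib

section
/- With the coordinate setup below, the fundamental tensor satisfies, at every point of U and for all indices i, j, k ∈ {1,2,3}: F_{kij} = (1/3)·(g_{kj}θ_i + g_{ki}θ_j + g̃_{kj}θ*_i + g̃_{ki}θ*_j). -/
open scoped BigOperators

/-- Points of ℝ³. -/
abbrev Pt := Fin 3 → ℝ

/-- Partial derivative `∂_i f` at `p`. -/
noncomputable def pd (i : Fin 3) (f : Pt → ℝ) (p : Pt) : ℝ :=
  fderiv ℝ f p (Pi.single i 1)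

/-- The circulant structure `Q` with `Q¹₂ = Q²₃ = Q³₁ = 1`. -/
def Qmat : Matrix (Fin 3) (Fin 3) ℝ := !![0,1,0; 0,0,1; 1,0,0]

/-- The metric `g_{ij}`: diagonal entries `A`, off-diagonal entries `B`. -/
def gm (A B : Pt → ℝ) (i j : Fin 3) (p : Pt) : ℝ :=
  if i = j then A p else B p

/-- The associated metric `g̃_{ij} = g_{is} Q^s_j + g_{sj} Q^s_i`. -/
def gt (A B : Pt → ℝ) (i j : Fin 3) (p : Pt) : ℝ :=
  ∑ s, (gm A B i s p * Qmat s j + gm A B s j p * Qmat s i)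

/-- Christoffel symbols `Γ^k_{ij}` of a metric `h` with (pointwise) inverse `hinv`. -/
noncomputable def Gamma (h hinv : Fin 3 → Fin 3 → Pt → ℝ) (k i j : Fin 3) (p : Pt) : ℝ :=
  (1/2) * ∑ s, hinv k s p * (pd i (h s j) p + pd j (h s i) p - pd s (h i j) p)

/-- Fundamental tensor `F_{kij} = ∂_k g̃_{ij} − Γ^s_{ki} g̃_{sj} − Γ^s_{kj} g̃_{si}`
of the metric `h` (with inverse `hinv`) acting on `ht` (= the associated metric). -/
noncomputable def Ften (h hinv ht : Fin 3 → Fin 3 → Pt → ℝ) (k i j : Fin 3) (p : Pt) : ℝ :=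
  pd k (ht i j) p - (∑ s, Gamma h hinv s k i p * ht s j p)
    - (∑ s, Gamma h hinv s k j p * ht s i p)

/-- Lee form `θ_k = g^{ij} F_{ijk}`. -/
noncomputable def theta (h hinv ht : Fin 3 → Fin 3 → Pt → ℝ) (k : Fin 3) (p : Pt) : ℝ :=
  ∑ i, ∑ j, hinv i j p * Ften h hinv ht i j k p

/-- Lee form `θ*_k = g^{ij} Q^s_j F_{isk}`. -/
noncomputable def thetaStar (h hinv ht : Fin 3 → Fin 3 → Pt → ℝ) (k : Fin 3) (p : Pt) : ℝ :=
  ∑ i, ∑ j, ∑ s, hinv i j p * Qmat s j * Ften h hinv ht i s k p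

theorem pd_gm (A B : Pt → ℝ) (p : Pt) (k i j : Fin 3) :
    pd k (gm A B i j) p = if i = j then pd k A p else pd k B p := by
  by_cases h : i = j
  · have : gm A B i j = A := by funext q; simp [gm, h]
    rw [this, if_pos h]
  · have : gm A B i j = B := by funext q; simp [gm, h]
    rw [this, if_neg h]

theorem gt_eq (A B : Pt → ℝ) (i j : Fin 3) :
    gt A B i j = fun p => if i = j then 2 * B p else A p + B p := by
  funext p
  fin_cases i <;> fin_cases j <;> simp [gt, gm, Qmat, Fin.sum_univ_three] <;> ring

theorem pd_gt (A B : Pt → ℝ) (p : Pt) (hA : DifferentiableAt ℝ A p)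
    (hB : DifferentiableAt ℝ B p) (k i j : Fin 3) :
    pd k (gt A B i j) p = if i = j then 2 * pd k B p else pd k A p + pd k B p := by
  rw [gt_eq]
  by_cases h : i = j
  · simp only [h, if_true, pd]
    rw [fderiv_const_mul hB]; simp
  · simp only [h, if_false, pd]
    rw [fderiv_fun_add hA hB]; simp

theorem ginv_eq (x y : ℝ) (hy : 0 < y) (hxy : y < x) (m : Fin 3 → Fin 3 → ℝ)
    (h : ∀ i j, (∑ s, (if i = s then x else y) * m s j) = if i = j then (1:ℝ) else 0)
    (i j : Fin 3) :
    m i j = (if i = j then x + y else -y) / ((x - y) * (x + 2 * y)) := by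
  have h1 : x - y ≠ 0 := by linarith
  have h2 : x + 2 * y ≠ 0 := by linarith
  have e0 := h 0 j
  have e1 := h 1 j
  have e2 := h 2 j
  rw [eq_div_iff (mul_ne_zero h1 h2)]
  fin_cases i <;> fin_cases j <;> simp [Fin.sum_univ_three] at e0 e1 e2 ⊢
  all_goals first
    | linear_combination (x+y) * e0 - y * e1 - y * e2
    | linear_combination (x+y) * e1 - y * e0 - y * e2
    | linear_combination (x+y) * e2 - y * e1 - y * e0

noncomputable def th (x y d : ℝ) (a b : Fin 3 → ℝ) (k : Fin 3) : ℝ :=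
  (3 * y * a k + 3 / 2 * (x + y) * (a 0 + a 1 + a 2 - a k) - 3 * x * b k
    - 3 * y * (b 0 + b 1 + b 2 - b k)) / d

noncomputable def ts (x y d : ℝ) (a b : Fin 3 → ℝ) (k : Fin 3) : ℝ :=
  (-(3 / 2) * x * a k - 3 / 2 * y * (a 0 + a 1 + a 2 - a k) + (3 * y - 3 / 2 * x) * b k
    + 3 / 2 * x * (b 0 + b 1 + b 2 - b k)) / d

set_option maxHeartbeats 4000000 in
/-- on `(M, g, Q)` the fundamental tensor satisfies
`F_{kij} = (1/3)(g_{kj}θ_i + g_{ki}θ_j + g̃_{kj}θ*_i + g̃_{ki}θ*_j)`. -/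
theorem fundamental_tensor_identity
    (U : Set Pt) (hU : IsOpen U) (A B : Pt → ℝ)
    (hA : ContDiffOn ℝ (⊤ : ℕ∞) A U) (hB : ContDiffOn ℝ (⊤ : ℕ∞) B U)
    (hpos : ∀ p ∈ U, 0 < B p ∧ B p < A p)
    (ginv : Fin 3 → Fin 3 → Pt → ℝ)
    (hginv : ∀ p ∈ U, ∀ i j, (∑ s, gm A B i s p * ginv s j p) = if i = j then (1:ℝ) else 0) :
    ∀ p ∈ U, ∀ i j k,
      Ften (gm A B) ginv (gt A B) k i j p =
        (1/3) * (gm A B k j p * theta (gm A B) ginv (gt A B) i p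
          + gm A B k i p * theta (gm A B) ginv (gt A B) j p
          + gt A B k j p * thetaStar (gm A B) ginv (gt A B) i p
          + gt A B k i p * thetaStar (gm A B) ginv (gt A B) j p) := by
  intro p hp
  have dA : DifferentiableAt ℝ A p :=
    (hA.contDiffAt (hU.mem_nhds hp)).differentiableAt (by simp)
  have dB : DifferentiableAt ℝ B p :=
    (hB.contDiffAt (hU.mem_nhds hp)).differentiableAt (by simp)
  obtain ⟨hy, hxy⟩ := hpos p hp
  have hI := ginv_eq (A p) (B p) hy hxy (fun i j => ginv i j p) (hginv p hp)
  beta_reduce at hI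
  generalize hd : (A p - B p) * (A p + 2 * B p) = d at hI
  have hd0 : d ≠ 0 := by
    rw [← hd]; exact mul_ne_zero (by linarith) (by linarith)
  have hF : ∀ k i j, Ften (gm A B) ginv (gt A B) k i j p =
      (1/3) * (gm A B k j p * th (A p) (B p) d (fun k => pd k A p) (fun k => pd k B p) i
          + gm A B k i p * th (A p) (B p) d (fun k => pd k A p) (fun k => pd k B p) j
          + gt A B k j p * ts (A p) (B p) d (fun k => pd k A p) (fun k => pd k B p) i
          + gt A B k i p * ts (A p) (B p) d (fun k => pd k A p) (fun k => pd k B p) j) := by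
    intro k i j
    have hM : ∀ r j, (∑ s, ginv s r p * gt A B s j p) = if r = j then 0 else 1 := by
      intro r j
      simp only [hI, gt_eq]
      fin_cases r <;> fin_cases j <;>
        simp [Fin.sum_univ_three] <;> field_simp <;> subst hd <;> ring
    have hG : ∀ k i j, (∑ s, Gamma (gm A B) ginv s k i p * gt A B s j p) =
        (1/2) * ∑ r, (if r = j then 0 else 1) *
          (pd k (gm A B r i) p + pd i (gm A B r k) p - pd r (gm A B k i) p) := by
      intro k i j
      simp only [← hM, Gamma, Fin.sum_univ_three]
      ring
    simp only [Ften, hG, pd_gm, pd_gt A B p dA dB]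
    simp only [gt_eq, gm, th, ts]
    clear hM hG hI
    generalize A p = x at *
    generalize B p = y at *
    fin_cases k <;> fin_cases i <;> fin_cases j <;>
      simp [Fin.sum_univ_three] <;> field_simp <;> subst hd <;> ring
  have r0 : th (A p) (B p) d (fun k => pd k A p) (fun k => pd k B p) 0 +
      ts (A p) (B p) d (fun k => pd k A p) (fun k => pd k B p) 1 +
      ts (A p) (B p) d (fun k => pd k A p) (fun k => pd k B p) 2 = 0 := by
    simp only [th, ts]; ring
  have r1 : th (A p) (B p) d (fun k => pd k A p) (fun k => pd k B p) 1 +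
      ts (A p) (B p) d (fun k => pd k A p) (fun k => pd k B p) 2 +
      ts (A p) (B p) d (fun k => pd k A p) (fun k => pd k B p) 0 = 0 := by
    simp only [th, ts]; ring
  have r2 : th (A p) (B p) d (fun k => pd k A p) (fun k => pd k B p) 2 +
      ts (A p) (B p) d (fun k => pd k A p) (fun k => pd k B p) 0 +
      ts (A p) (B p) d (fun k => pd k A p) (fun k => pd k B p) 1 = 0 := by
    simp only [th, ts]; ring
  have hT : ∀ k, theta (gm A B) ginv (gt A B) k p =
      th (A p) (B p) d (fun k => pd k A p) (fun k => pd k B p) k := by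
    intro k
    simp only [theta, hF, hI, gt_eq, gm]
    clear hF
    generalize th (A p) (B p) d (fun k => pd k A p) (fun k => pd k B p) = t at *
    generalize ts (A p) (B p) d (fun k => pd k A p) (fun k => pd k B p) = u at *
    obtain e0 : t 0 = - u 1 - u 2 := by linarith
    obtain e1 : t 1 = - u 2 - u 0 := by linarith
    obtain e2 : t 2 = - u 0 - u 1 := by linarith
    fin_cases k <;>
      simp [Fin.sum_univ_three, Qmat, e0, e1, e2] <;> field_simp <;> subst hd <;> ring
  have hS : ∀ k, thetaStar (gm A B) ginv (gt A B) k p =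
      ts (A p) (B p) d (fun k => pd k A p) (fun k => pd k B p) k := by
    intro k
    simp only [thetaStar, hF, hI, gt_eq, gm]
    clear hF hT
    generalize th (A p) (B p) d (fun k => pd k A p) (fun k => pd k B p) = t at *
    generalize ts (A p) (B p) d (fun k => pd k A p) (fun k => pd k B p) = u at *
    obtain e0 : t 0 = - u 1 - u 2 := by linarith
    obtain e1 : t 1 = - u 2 - u 0 := by linarith
    obtain e2 : t 2 = - u 0 - u 1 := by linarith
    fin_cases k <;>
      simp [Fin.sum_univ_three, Qmat, e0, e1, e2] <;> field_simp <;> subst hd <;> ring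
  intro i j k
  rw [hF, hT, hT, hS, hS]
end

section
/- With the coordinate setup below, the Ricci tensors and scalar curvatures of g and g̃ satisfy, at every point of U: ρ̃_{ij} = ρ_{ij} + (1/3)·(τ̃* − τ)·g_{ij} + (1/6)·(2τ̃ − 2τ* + τ̃* − τ)·g̃_{ij}. -/
open scoped BigOperators

/-- Curvature `R^l_{ijk} = ∂_i Γ^l_{jk} − ∂_j Γ^l_{ik} + Γ^s_{jk}Γ^l_{is} − Γ^s_{ik}Γ^l_{js}`
of the metric `h` with inverse `hinv`. -/
noncomputable def Riem (h hinv : Fin 3 → Fin 3 → Pt → ℝ) (l i j k : Fin 3) (p : Pt) : ℝ :=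
  pd i (Gamma h hinv l j k) p - pd j (Gamma h hinv l i k) p
    + (∑ s, Gamma h hinv s j k p * Gamma h hinv l i s p)
    - (∑ s, Gamma h hinv s i k p * Gamma h hinv l j s p)

/-- Lowered curvature `R_{ijkl} = h_{ls} R^s_{ijk}`. -/
noncomputable def RiemLow (h hinv : Fin 3 → Fin 3 → Pt → ℝ) (i j k l : Fin 3) (p : Pt) : ℝ :=
  ∑ s, h l s p * Riem h hinv s i j k p

/-- Ricci tensor `ρ_{jk} = h^{il} R_{ijkl}`. -/
noncomputable def Ricci (h hinv : Fin 3 → Fin 3 → Pt → ℝ) (j k : Fin 3) (p : Pt) : ℝ :=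
  ∑ i, ∑ l, hinv i l p * RiemLow h hinv i j k l p

/-- Scalar curvature obtained by contracting the Ricci tensor of `(h, hinv)` with the
(inverse) metric `contr`: `contr^{jk} ρ_{jk}`. -/
noncomputable def scal (h hinv contr : Fin 3 → Fin 3 → Pt → ℝ) (p : Pt) : ℝ :=
  ∑ j, ∑ k, contr j k p * Ricci h hinv j k p

noncomputable def Nn (i j : Fin 3) : ℝ := if i = j then 2/3 else -1/3

noncomputable def Gj (t r s : ℝ) (F H : Fin 3 → ℝ) (k i j : Fin 3) : ℝ :=
  (1/2) * (F i * Nn k j + F j * Nn k i + (H i + H j)/3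
    - (F k - (F 0 + F 1 + F 2)/3) * Nn i j
    - t * (r * (H k - (H 0 + H 1 + H 2)/3)) / 3
    - t⁻¹ * (s * ((F 0 + F 1 + F 2)/3)) * Nn i j - (H 0 + H 1 + H 2)/9)

noncomputable def dGj (t r s : ℝ) (F H : Fin 3 → ℝ) (FF HH : Fin 3 → Fin 3 → ℝ)
    (m k i j : Fin 3) : ℝ :=
  (1/2) * (FF m i * Nn k j + FF m j * Nn k i + (HH m i + HH m j)/3
    - (FF m k - (FF m 0 + FF m 1 + FF m 2)/3) * Nn i j
    - t * (r * (HH m k - (HH m 0 + HH m 1 + HH m 2)/3)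
        + r * (H m - F m) * (H k - (H 0 + H 1 + H 2)/3)) / 3
    - t⁻¹ * (s * ((FF m 0 + FF m 1 + FF m 2)/3)
        - s * (H m - F m) * ((F 0 + F 1 + F 2)/3)) * Nn i j
    - (HH m 0 + HH m 1 + HH m 2)/9)

noncomputable def RicJ (t r s : ℝ) (F H : Fin 3 → ℝ) (FF HH : Fin 3 → Fin 3 → ℝ)
    (j k : Fin 3) : ℝ :=
  ∑ i, (dGj t r s F H FF HH i i j k - dGj t r s F H FF HH j i i k
    + (∑ u, Gj t r s F H u j k * Gj t r s F H i i u)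
    - (∑ u, Gj t r s F H u i k * Gj t r s F H i j u))

noncomputable def DJ (r s : ℝ) (F H : Fin 3 → ℝ) (FF HH : Fin 3 → Fin 3 → ℝ)
    (j k : Fin 3) : ℝ := RicJ (-2) r s F H FF HH j k - RicJ 1 r s F H FF HH j k

noncomputable def GX (F H : Fin 3 → ℝ) (k i j : Fin 3) : ℝ :=
  (1/2) * (F i * Nn k j + F j * Nn k i + (H i + H j)/3
    - (F k - (F 0 + F 1 + F 2)/3) * Nn i j - (H 0 + H 1 + H 2)/9)

noncomputable def GY (r : ℝ) (H : Fin 3 → ℝ) (k : Fin 3) : ℝ :=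
  -(r * (H k - (H 0 + H 1 + H 2)/3)) / 6

noncomputable def GZ (s : ℝ) (F : Fin 3 → ℝ) (i j : Fin 3) : ℝ :=
  -(s * (F 0 + F 1 + F 2)/6) * Nn i j

noncomputable def dY (r : ℝ) (F H : Fin 3 → ℝ) (HH : Fin 3 → Fin 3 → ℝ) (m k : Fin 3) : ℝ :=
  -(r * (HH m k - (HH m 0 + HH m 1 + HH m 2)/3)
        + r * (H m - F m) * (H k - (H 0 + H 1 + H 2)/3)) / 6

noncomputable def dZ (s : ℝ) (F H : Fin 3 → ℝ) (FF : Fin 3 → Fin 3 → ℝ) (m i j : Fin 3) : ℝ :=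
  -(s * (FF m 0 + FF m 1 + FF m 2)/6 - s * (H m - F m) * (F 0 + F 1 + F 2)/6) * Nn i j

noncomputable def EY (r : ℝ) (F H : Fin 3 → ℝ) (HH : Fin 3 → Fin 3 → ℝ) (j k : Fin 3) : ℝ :=
  ∑ i, (dY r F H HH i i - dY r F H HH j i
    + (∑ u, (GY r H u * GX F H i i u + GX F H u j k * GY r H i))
    - (∑ u, (GY r H u * GX F H i j u + GX F H u i k * GY r H i)))

noncomputable def EZ (s : ℝ) (F H : Fin 3 → ℝ) (FF : Fin 3 → Fin 3 → ℝ) (j k : Fin 3) : ℝ :=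
  ∑ i, (dZ s F H FF i j k - dZ s F H FF j i k
    + (∑ u, (GZ s F j k * GX F H i i u + GX F H u j k * GZ s F i u))
    - (∑ u, (GZ s F i k * GX F H i j u + GX F H u i k * GZ s F j u)))

lemma Nn00 : Nn 0 0 = 2/3 := by simp [Nn]
lemma Nn11 : Nn 1 1 = 2/3 := by simp [Nn]
lemma Nn22 : Nn 2 2 = 2/3 := by simp [Nn]
lemma Nn01 : Nn 0 1 = -1/3 := by simp [Nn]
lemma Nn02 : Nn 0 2 = -1/3 := by simp [Nn]
lemma Nn10 : Nn 1 0 = -1/3 := by simp [Nn]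
lemma Nn12 : Nn 1 2 = -1/3 := by simp [Nn]
lemma Nn20 : Nn 2 0 = -1/3 := by simp [Nn]
lemma Nn21 : Nn 2 1 = -1/3 := by simp [Nn]

lemma Nn_row (j : Fin 3) : Nn j 0 + Nn j 1 + Nn j 2 = 0 := by
  fin_cases j <;> simp [Nn] <;> norm_num

lemma GZ_row (s : ℝ) (F : Fin 3 → ℝ) (j : Fin 3) : GZ s F j 0 + GZ s F j 1 + GZ s F j 2 = 0 := by
  simp only [GZ]; linear_combination -(s * (F 0 + F 1 + F 2)/6) * Nn_row j

lemma Gj_eq (t r s : ℝ) (F H : Fin 3 → ℝ) (k i j : Fin 3) :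
    Gj t r s F H k i j = GX F H k i j + t * GY r H k + t⁻¹ * GZ s F i j := by
  simp only [Gj, GX, GY, GZ]; ring

lemma DJ_eq (r s : ℝ) (F H : Fin 3 → ℝ) (FF HH : Fin 3 → Fin 3 → ℝ) (j k : Fin 3) :
    DJ r s F H FF HH j k = -3 * EY r F H HH j k - 3/2 * EZ s F H FF j k := by
  have hd : ∀ m k i j, dGj (-2) r s F H FF HH m k i j = dGj 1 r s F H FF HH m k i j
      - 3 * dY r F H HH m k - 3/2 * dZ s F H FF m i j := by
    intro m k i j; simp only [dGj, dY, dZ]; norm_num; ring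
  have hZ := GZ_row s F j
  have hZ0 := GZ_row s F 0
  have hZ1 := GZ_row s F 1
  have hZ2 := GZ_row s F 2
  simp only [DJ, RicJ, hd, Gj_eq, EY, EZ, Fin.sum_univ_three]
  linear_combination (-3/4) * GZ s F j k * (hZ0 + hZ1 + hZ2)
    + 3/4 * (GZ s F 0 k + GZ s F 1 k + GZ s F 2 k) * hZ

lemma EY_circ (r : ℝ) (F H : Fin 3 → ℝ) (HH : Fin 3 → Fin 3 → ℝ)
    (hH : ∀ i j, HH i j = HH j i) (i j : Fin 3) :
    EY r F H HH i j = if i = j then EY r F H HH 0 0 else EY r F H HH 0 1 := by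
  have b1 := hH 1 0
  have b2 := hH 2 0
  have b3 := hH 2 1
  fin_cases i <;> fin_cases j <;>
    simp [-one_div] <;>
    simp only [EY, dY, GX, GY, Fin.sum_univ_three, Nn00, Nn01, Nn02, Nn10, Nn11, Nn12, Nn20,
      Nn21, Nn22, b1, b2, b3] <;> ring

lemma EZ_circ (s : ℝ) (F H : Fin 3 → ℝ) (FF : Fin 3 → Fin 3 → ℝ)
    (hF : ∀ i j, FF i j = FF j i) (i j : Fin 3) :
    EZ s F H FF i j = if i = j then EZ s F H FF 0 0 else EZ s F H FF 0 1 := by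
  have b1 := hF 1 0
  have b2 := hF 2 0
  have b3 := hF 2 1
  fin_cases i <;> fin_cases j <;>
    simp [-one_div] <;>
    simp only [EZ, dZ, GX, GZ, Fin.sum_univ_three, Nn00, Nn01, Nn02, Nn10, Nn11, Nn12, Nn20,
      Nn21, Nn22, b1, b2, b3] <;> ring

lemma DJ_circ (r s : ℝ) (F H : Fin 3 → ℝ) (FF HH : Fin 3 → Fin 3 → ℝ)
    (hF : ∀ i j, FF i j = FF j i) (hH : ∀ i j, HH i j = HH j i) (i j : Fin 3) :
    DJ r s F H FF HH i j = if i = j then DJ r s F H FF HH 0 0 else DJ r s F H FF HH 0 1 := by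
  have h1 := EY_circ r F H HH hH i j
  have h2 := EZ_circ s F H FF hF i j
  simp only [DJ_eq]
  split_ifs at * with h <;> rw [h1, h2]

def PD (m : Fin 3) (φ : Pt → ℝ) (p : Pt) (d : ℝ) : Prop :=
  ∃ L : Pt →L[ℝ] ℝ, HasFDerivAt φ L p ∧ L (Pi.single m 1) = d

lemma PD.pd_eq {m : Fin 3} {φ : Pt → ℝ} {p : Pt} {d : ℝ} (h : PD m φ p d) : pd m φ p = d := by
  obtain ⟨L, hL, rfl⟩ := h
  simp [pd, hL.fderiv]

lemma PD.of_diff {m : Fin 3} {φ : Pt → ℝ} {p : Pt} (h : DifferentiableAt ℝ φ p) :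
    PD m φ p (pd m φ p) := ⟨_, h.hasFDerivAt, rfl⟩

lemma PD.add {m : Fin 3} {φ ψ : Pt → ℝ} {p : Pt} {d e : ℝ} (h : PD m φ p d) (h' : PD m ψ p e) :
    PD m (fun q => φ q + ψ q) p (d + e) := by
  obtain ⟨L, hL, rfl⟩ := h
  obtain ⟨L', hL', rfl⟩ := h'
  exact ⟨_, hL.add hL', by simp⟩

lemma PD.sub {m : Fin 3} {φ ψ : Pt → ℝ} {p : Pt} {d e : ℝ} (h : PD m φ p d) (h' : PD m ψ p e) :
    PD m (fun q => φ q - ψ q) p (d - e) := by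
  obtain ⟨L, hL, rfl⟩ := h
  obtain ⟨L', hL', rfl⟩ := h'
  exact ⟨_, hL.sub hL', by simp⟩

lemma PD.mul {m : Fin 3} {φ ψ : Pt → ℝ} {p : Pt} {d e : ℝ} (h : PD m φ p d) (h' : PD m ψ p e) :
    PD m (fun q => φ q * ψ q) p (φ p * e + ψ p * d) := by
  obtain ⟨L, hL, rfl⟩ := h
  obtain ⟨L', hL', rfl⟩ := h'
  exact ⟨_, hL.mul hL', by simp⟩

lemma PD.const_mul {m : Fin 3} {φ : Pt → ℝ} {p : Pt} {d : ℝ} (c : ℝ) (h : PD m φ p d) :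
    PD m (fun q => c * φ q) p (c * d) := by
  obtain ⟨L, hL, rfl⟩ := h
  exact ⟨_, hL.const_mul c, by simp⟩

lemma PD.mul_const {m : Fin 3} {φ : Pt → ℝ} {p : Pt} {d : ℝ} (h : PD m φ p d) (c : ℝ) :
    PD m (fun q => φ q * c) p (d * c) := by
  obtain ⟨L, hL, rfl⟩ := h
  exact ⟨_, hL.mul_const c, by simp [mul_comm]⟩

lemma PD.div_const {m : Fin 3} {φ : Pt → ℝ} {p : Pt} {d : ℝ} (h : PD m φ p d) (c : ℝ) :
    PD m (fun q => φ q / c) p (d / c) := by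
  simpa only [div_eq_mul_inv] using h.mul_const c⁻¹

lemma PD.exp {m : Fin 3} {φ : Pt → ℝ} {p : Pt} {d : ℝ} (h : PD m φ p d) :
    PD m (fun q => Real.exp (φ q)) p (Real.exp (φ p) * d) := by
  obtain ⟨L, hL, rfl⟩ := h
  exact ⟨_, hL.exp, by simp⟩

lemma pd_congr {U : Set Pt} (hU : IsOpen U) {φ ψ : Pt → ℝ} (h : ∀ q ∈ U, φ q = ψ q)
    {p : Pt} (hp : p ∈ U) (m : Fin 3) : pd m φ p = pd m ψ p := by
  have : φ =ᶠ[nhds p] ψ := Filter.eventually_of_mem (hU.mem_nhds hp) h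
  simp only [pd, this.fderiv_eq]

lemma pd_diff {f : Pt → ℝ} {p : Pt} (hf : ContDiffAt ℝ (⊤ : ℕ∞) f p) (l : Fin 3) :
    DifferentiableAt ℝ (pd l f) p := by
  have h1 : ContDiffAt ℝ 1 (fderiv ℝ f) p := hf.fderiv_right (by norm_cast)
  exact (h1.differentiableAt (by norm_num)).clm_apply (differentiableAt_const _)

lemma pd_symm {f : Pt → ℝ} {p : Pt} (hf : ContDiffAt ℝ (⊤ : ℕ∞) f p) (l m : Fin 3) :
    pd l (pd m f) p = pd m (pd l f) p := by
  have h1 : ContDiffAt ℝ 1 (fderiv ℝ f) p := hf.fderiv_right (by norm_cast)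
  have hd := h1.differentiableAt (by norm_num)
  have key : ∀ a b, pd a (pd b f) p = fderiv ℝ (fderiv ℝ f) p (Pi.single a 1) (Pi.single b 1) := by
    intro a b
    have := hd.hasFDerivAt.clm_apply
      (hasFDerivAt_const (Pi.single b 1 : Pt) p)
    have h2 := PD.pd_eq (m := a) ⟨_, this, rfl⟩
    change pd a (fun q => fderiv ℝ f q (Pi.single b 1)) p = _
    rw [h2]; simp
  rw [key, key]
  exact (hf.isSymmSndFDerivAt (by simp; norm_cast)) _ _

section
variable {U : Set Pt} (hU : IsOpen U) {f h : Pt → ℝ}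
  (hf : ∀ p ∈ U, ContDiffAt ℝ (⊤ : ℕ∞) f p) (hh : ∀ p ∈ U, ContDiffAt ℝ (⊤ : ℕ∞) h p)
  {κ μ : ℝ} (hκ : κ ≠ 0) (hμ : μ ≠ 0) {M Mi : Fin 3 → Fin 3 → Pt → ℝ}
  (hM : ∀ p ∈ U, ∀ i j, M i j p = κ * Real.exp (f p) * Nn i j + μ * Real.exp (h p) / 3)
  (hMi : ∀ p ∈ U, ∀ i j, (∑ s, M i s p * Mi s j p) = if i = j then (1:ℝ) else 0)

lemma Nn_mul (i j : Fin 3) : Nn i 0 * Nn 0 j + Nn i 1 * Nn 1 j + Nn i 2 * Nn 2 j = Nn i j := by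
  fin_cases i <;> fin_cases j <;> simp [Nn] <;> norm_num

lemma Nn_symm (i j : Fin 3) : Nn i j = Nn j i := by
  simp only [Nn, eq_comm]

lemma Nn_one (i j : Fin 3) : Nn i j + 1/3 = if i = j then 1 else 0 := by
  simp only [Nn]; split_ifs <;> norm_num

include hκ hμ hM in
lemma E_mul {p : Pt} (hp : p ∈ U) (i j : Fin 3) :
    ∑ s, (κ⁻¹ * Real.exp (-f p) * Nn i s + μ⁻¹ * Real.exp (-h p) / 3) * M s j p
      = if i = j then (1:ℝ) else 0 := by
  have hx : Real.exp (-f p) * Real.exp (f p) = 1 := by rw [← Real.exp_add]; simp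
  have hy : Real.exp (-h p) * Real.exp (h p) = 1 := by rw [← Real.exp_add]; simp
  have hk : κ⁻¹ * κ = 1 := inv_mul_cancel₀ hκ
  have hm : μ⁻¹ * μ = 1 := inv_mul_cancel₀ hμ
  have r1 := Nn_row i
  have r2 := Nn_row j
  rw [Nn_symm j 0, Nn_symm j 1, Nn_symm j 2] at r2
  have r3 := Nn_mul i j
  rw [← Nn_one]
  simp only [hM p hp, Fin.sum_univ_three]
  generalize Real.exp (-f p) = x' at *
  generalize Real.exp (f p) = x at *
  generalize Real.exp (-h p) = y' at *
  generalize Real.exp (h p) = y at *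
  linear_combination (κ⁻¹ * x' * κ * x) * r3 + (κ⁻¹ * x' * μ * y / 3) * r1
    + (μ⁻¹ * y' / 3 * κ * x) * r2 + Nn i j * (x' * x) * hk + Nn i j * hx
    + (1/3) * (y' * y) * hm + (1/3) * hy

include hκ hμ hM hMi in
lemma Mi_eq {p : Pt} (hp : p ∈ U) (i j : Fin 3) :
    Mi i j p = κ⁻¹ * Real.exp (-f p) * Nn i j + μ⁻¹ * Real.exp (-h p) / 3 := by
  have h1 : Matrix.of (fun i j => κ⁻¹ * Real.exp (-f p) * Nn i j + μ⁻¹ * Real.exp (-h p) / 3)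
      * Matrix.of (fun i j => M i j p) = 1 := by
    ext i j
    simp only [Matrix.mul_apply, Matrix.of_apply, Matrix.one_apply]
    exact E_mul hκ hμ hM hp i j
  have h2 : Matrix.of (fun i j => M i j p) * Matrix.of (fun i j => Mi i j p) = 1 := by
    ext i j
    simp only [Matrix.mul_apply, Matrix.of_apply, Matrix.one_apply]
    exact hMi p hp i j
  have := left_inv_eq_right_inv h1 h2
  exact (congrFun (congrFun this i) j).symm

include hU hf hh hM in
lemma pd_M {p : Pt} (hp : p ∈ U) (l i j : Fin 3) :
    pd l (M i j) p = κ * (Real.exp (f p) * pd l f p) * Nn i j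
      + μ * (Real.exp (h p) * pd l h p) / 3 := by
  rw [pd_congr hU (fun q hq => hM q hq i j) hp]
  have h1 := PD.of_diff (m := l) ((hf p hp).differentiableAt (by simp))
  have h2 := PD.of_diff (m := l) ((hh p hp).differentiableAt (by simp))
  exact PD.pd_eq (((h1.exp.const_mul κ).mul_const (Nn i j)).add ((h2.exp.const_mul μ).div_const 3))

include hU hf hh hκ hμ hM hMi in
lemma Gamma_eq {p : Pt} (hp : p ∈ U) (k i j : Fin 3) :
    Gamma M Mi k i j p = Gj (μ / κ) (Real.exp (h p - f p)) (Real.exp (f p - h p))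
      (fun l => pd l f p) (fun l => pd l h p) k i j := by
  have hx : Real.exp (-f p) * Real.exp (f p) = 1 := by rw [← Real.exp_add]; simp
  have hy : Real.exp (-h p) * Real.exp (h p) = 1 := by rw [← Real.exp_add]; simp
  have hk : κ⁻¹ * κ = 1 := inv_mul_cancel₀ hκ
  have hm : μ⁻¹ * μ = 1 := inv_mul_cancel₀ hμ
  have e1 : Real.exp (h p - f p) = Real.exp (-f p) * Real.exp (h p) := by
    rw [← Real.exp_add]; ring_nf
  have e2 : Real.exp (f p - h p) = Real.exp (-h p) * Real.exp (f p) := by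
    rw [← Real.exp_add]; ring_nf
  have e3 : (μ / κ)⁻¹ = κ * μ⁻¹ := by rw [inv_div, div_eq_mul_inv]
  have rk := Nn_row k
  have ri := Nn_row i
  have rj := Nn_row j
  rw [Nn_symm j 0, Nn_symm j 1, Nn_symm j 2] at rj
  rw [Nn_symm i 0, Nn_symm i 1, Nn_symm i 2] at ri
  have mi := Nn_mul k i
  have mj := Nn_mul k j
  have hS : ∀ G : Fin 3 → ℝ, Nn k 0 * G 0 + Nn k 1 * G 1 + Nn k 2 * G 2
      = G k - (G 0 + G 1 + G 2) / 3 := by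
    intro G; fin_cases k <;> simp [Nn] <;> ring
  have hF := hS (fun l => pd l f p)
  have hH := hS (fun l => pd l h p)
  simp only [Gamma, Gj, pd_M hU hf hh hM hp, Mi_eq hκ hμ hM hMi hp, Fin.sum_univ_three, e1, e2,
    e3]
  rw [div_eq_mul_inv μ κ]
  clear e1 e2 e3
  generalize Real.exp (-f p) = x' at *
  generalize Real.exp (f p) = x at *
  generalize Real.exp (-h p) = y' at *
  generalize Real.exp (h p) = y at *
  generalize κ⁻¹ = κ' at *
  generalize μ⁻¹ = μ' at *
  generalize pd i f p = Fi at *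
  generalize pd j f p = Fj at *
  generalize pd i h p = Hi at *
  generalize pd j h p = Hj at *
  have hX : κ' * x' * (κ * x) = 1 := by linear_combination x' * x * hk + hx
  have hY : μ' * y' * (μ * y) = 1 := by linear_combination y' * y * hm + hy
  linear_combination (1/2) * (κ' * x' * (κ * x) * (Fi * mj + Fj * mi - Nn i j * hF)
    + κ' * x' * (μ * y) / 3 * ((Hi + Hj) * rk - hH)
    + μ' * y' * (κ * x) / 3 * (Fi * rj + Fj * ri)
    + hX * (Fi * Nn k j + Fj * Nn k i - Nn i j * (pd k f p - (pd 0 f p + pd 1 f p + pd 2 f p) / 3))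
    + hY * ((Hi + Hj) / 3 - (pd 0 h p + pd 1 h p + pd 2 h p) / 9))

include hU hf hh hκ hμ hM hMi in
lemma pd_Gamma {p : Pt} (hp : p ∈ U) (m k i j : Fin 3) :
    pd m (Gamma M Mi k i j) p = dGj (μ / κ) (Real.exp (h p - f p)) (Real.exp (f p - h p))
      (fun l => pd l f p) (fun l => pd l h p) (fun a b => pd a (pd b f) p)
      (fun a b => pd a (pd b h) p) m k i j := by
  rw [pd_congr hU (fun q hq => Gamma_eq hU hf hh hκ hμ hM hMi hq k i j) hp]
  have h1 := PD.of_diff (m := m) ((hf p hp).differentiableAt (by simp))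
  have h2 := PD.of_diff (m := m) ((hh p hp).differentiableAt (by simp))
  have hF : ∀ l, PD m (fun q => pd l f q) p (pd m (pd l f) p) :=
    fun l => PD.of_diff (pd_diff (hf p hp) l)
  have hH : ∀ l, PD m (fun q => pd l h q) p (pd m (pd l h) p) :=
    fun l => PD.of_diff (pd_diff (hh p hp) l)
  have SF := ((hF 0).add (hF 1)).add (hF 2)
  have SH := ((hH 0).add (hH 1)).add (hH 2)
  have key := ((((((((hF i).mul_const (Nn k j)).add ((hF j).mul_const (Nn k i))).add
    (((hH i).add (hH j)).div_const 3)).sub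
    (((hF k).sub (SF.div_const 3)).mul_const (Nn i j))).sub
    ((((h2.sub h1).exp.mul ((hH k).sub (SH.div_const 3))).const_mul (μ / κ)).div_const 3)).sub
    ((((h1.sub h2).exp.mul (SF.div_const 3)).const_mul (μ / κ)⁻¹).mul_const (Nn i j))).sub
    (SH.div_const 9)).const_mul (1/2)
  refine (key.pd_eq).trans ?_
  simp only [dGj]
  ring

include hκ hμ hM hMi in
lemma Ricci_contract {p : Pt} (hp : p ∈ U) (j k : Fin 3) :
    Ricci M Mi j k p = ∑ i, Riem M Mi i i j k p := by
  simp only [Ricci, RiemLow]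
  refine Finset.sum_congr rfl fun i _ => ?_
  have h1 : ∀ s, ∑ l, Mi i l p * M l s p = if i = s then (1:ℝ) else 0 := by
    intro s
    rw [← E_mul hκ hμ hM hp i s]
    simp only [Mi_eq hκ hμ hM hMi hp]
  simp only [Finset.mul_sum]
  rw [Finset.sum_comm]
  simp only [← mul_assoc, ← Finset.sum_mul, h1]
  simp

include hU hf hh hκ hμ hM hMi in
lemma Ricci_eq {p : Pt} (hp : p ∈ U) (j k : Fin 3) :
    Ricci M Mi j k p = RicJ (μ / κ) (Real.exp (h p - f p)) (Real.exp (f p - h p))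
      (fun l => pd l f p) (fun l => pd l h p) (fun a b => pd a (pd b f) p)
      (fun a b => pd a (pd b h) p) j k := by
  rw [Ricci_contract hκ hμ hM hMi hp]
  simp only [Riem, RicJ, pd_Gamma hU hf hh hκ hμ hM hMi hp, Gamma_eq hU hf hh hκ hμ hM hMi hp]

end

/-- relation between the Ricci tensors and scalar curvatures of `g` and
`g̃`: `ρ̃_{ij} = ρ_{ij} + (1/3)(τ̃* − τ) g_{ij} + (1/6)(2τ̃ − 2τ* + τ̃* − τ) g̃_{ij}`. -/
theorem ricci_relation
    (U : Set Pt) (hU : IsOpen U) (A B : Pt → ℝ)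
    (hA : ContDiffOn ℝ (⊤ : ℕ∞) A U) (hB : ContDiffOn ℝ (⊤ : ℕ∞) B U)
    (hpos : ∀ p ∈ U, 0 < B p ∧ B p < A p)
    (ginv gtinv : Fin 3 → Fin 3 → Pt → ℝ)
    (hginv : ∀ p ∈ U, ∀ i j, (∑ s, gm A B i s p * ginv s j p) = if i = j then (1:ℝ) else 0)
    (hgtinv : ∀ p ∈ U, ∀ i j, (∑ s, gt A B i s p * gtinv s j p) = if i = j then (1:ℝ) else 0) :
    ∀ p ∈ U, ∀ i j,
      Ricci (gt A B) gtinv i j p =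
        Ricci (gm A B) ginv i j p
        + (1/3) * (scal (gt A B) gtinv ginv p - scal (gm A B) ginv ginv p) * gm A B i j p
        + (1/6) * (2 * scal (gt A B) gtinv gtinv p - 2 * scal (gm A B) ginv gtinv p
            + scal (gt A B) gtinv ginv p - scal (gm A B) ginv ginv p) * gt A B i j p := by
  intro p hp
  have hA' : ∀ q ∈ U, ContDiffAt ℝ (⊤ : ℕ∞) A q := fun q hq => hA.contDiffAt (hU.mem_nhds hq)
  have hB' : ∀ q ∈ U, ContDiffAt ℝ (⊤ : ℕ∞) B q := fun q hq => hB.contDiffAt (hU.mem_nhds hq)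
  have pa : ∀ q ∈ U, 0 < A q - B q := fun q hq => by linarith [(hpos q hq).2]
  have pc : ∀ q ∈ U, 0 < A q + 2 * B q := fun q hq => by
    linarith [(hpos q hq).1, (hpos q hq).2]
  obtain ⟨f, hfd⟩ : ∃ f : Pt → ℝ, f = fun q => Real.log (A q - B q) := ⟨_, rfl⟩
  obtain ⟨h, hhd⟩ : ∃ h : Pt → ℝ, h = fun q => Real.log (A q + 2 * B q) := ⟨_, rfl⟩
  have hf : ∀ q ∈ U, ContDiffAt ℝ (⊤ : ℕ∞) f q := fun q hq => by
    rw [hfd]; exact ((hA' q hq).sub (hB' q hq)).log (pa q hq).ne'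
  have hh : ∀ q ∈ U, ContDiffAt ℝ (⊤ : ℕ∞) h q := fun q hq => by
    rw [hhd]; exact ((hA' q hq).add (contDiffAt_const.mul (hB' q hq))).log (pc q hq).ne'
  have ef : ∀ q ∈ U, Real.exp (f q) = A q - B q := fun q hq => by
    rw [hfd]; exact Real.exp_log (pa q hq)
  have eh : ∀ q ∈ U, Real.exp (h q) = A q + 2 * B q := fun q hq => by
    rw [hhd]; exact Real.exp_log (pc q hq)
  have Mg : ∀ q ∈ U, ∀ i j, gm A B i j q
      = 1 * Real.exp (f q) * Nn i j + 1 * Real.exp (h q) / 3 := by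
    intro q hq i j
    rw [ef q hq, eh q hq]
    simp only [gm, Nn]
    split_ifs <;> ring
  have Mt : ∀ q ∈ U, ∀ i j, gt A B i j q
      = (-1) * Real.exp (f q) * Nn i j + 2 * Real.exp (h q) / 3 := by
    intro q hq i j
    rw [ef q hq, eh q hq]
    fin_cases i <;> fin_cases j <;> simp [gt, gm, Nn, Qmat, Fin.sum_univ_three] <;> ring
  have Rg := Ricci_eq hU hf hh one_ne_zero one_ne_zero Mg hginv hp
  have Rt := Ricci_eq hU hf hh (by norm_num : (-1:ℝ) ≠ 0) two_ne_zero Mt hgtinv hp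
  have Ig := Mi_eq one_ne_zero one_ne_zero Mg hginv hp
  have It := Mi_eq (by norm_num : (-1:ℝ) ≠ 0) two_ne_zero Mt hgtinv hp
  rw [show (1:ℝ) / 1 = 1 by norm_num] at Rg
  rw [show (2:ℝ) / (-1) = -2 by norm_num] at Rt
  have hD := DJ_circ (Real.exp (h p - f p)) (Real.exp (f p - h p))
      (fun l => pd l f p) (fun l => pd l h p) (fun a b => pd a (pd b f) p)
      (fun a b => pd a (pd b h) p) (fun a b => pd_symm (hf p hp) a b)
      (fun a b => pd_symm (hh p hp) a b)
  obtain ⟨α, β, hR⟩ : ∃ α β : ℝ, ∀ i j, Ricci (gt A B) gtinv i j p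
      = Ricci (gm A B) ginv i j p + (α * Nn i j + β / 3) := by
    generalize DJ _ _ _ _ _ _ 0 0 = x at hD
    generalize DJ _ _ _ _ _ _ 0 1 = y at hD
    refine ⟨x - y, x + 2 * y, fun i j => ?_⟩
    have := hD i j
    rw [DJ, ← Rg, ← Rt] at this
    rw [eq_add_of_sub_eq this]
    simp only [Nn]
    split_ifs <;> ring
  have hx : Real.exp (-f p) * Real.exp (f p) = 1 := by rw [← Real.exp_add]; simp
  have hy : Real.exp (-h p) * Real.exp (h p) = 1 := by rw [← Real.exp_add]; simp
  have s1 : scal (gt A B) gtinv ginv p - scal (gm A B) ginv ginv p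
      = 2 * α * Real.exp (-f p) + β * Real.exp (-h p) := by
    simp only [scal, hR, Ig, Fin.sum_univ_three, Nn00, Nn01, Nn02, Nn10, Nn11, Nn12, Nn20,
      Nn21, Nn22]
    ring
  have s2 : scal (gt A B) gtinv gtinv p - scal (gm A B) ginv gtinv p
      = -2 * α * Real.exp (-f p) + β * Real.exp (-h p) / 2 := by
    simp only [scal, hR, It, Fin.sum_univ_three, Nn00, Nn01, Nn02, Nn10, Nn11, Nn12, Nn20,
      Nn21, Nn22]
    ring
  intro i j
  rw [hR i j, Mg p hp, Mt p hp]
  linear_combination (-α * Nn i j) * hx - (β / 3) * hy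
    - (1/3) * (1 * Real.exp (f p) * Nn i j + 1 * Real.exp (h p) / 3) * s1
    - (1/6) * ((-1) * Real.exp (f p) * Nn i j + 2 * Real.exp (h p) / 3) * (2 * s2 + s1)
end
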